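/- arXiv:2112.09927 — 5 statements merged into one kernel-verified Lean document; each statement's English description precedes it below -/
import Mathlib

section
/- Fix m ∈ ℕ, T > 0 and an infinitely differentiable function u₀ : ℝ → ℝ. Define u(t,x) = Σ_{j=0}^{m} C_j^{(m)} t^j u₀^{(j)}(x+t). Then u satisfies the singular hyperbolic equation ∂_t² u(t,x) − ∂_x² u(t,x) + (1/(2t)) (∂_t u(t,x) − (4m+1) ∂_x u(t,x)) = 0 for all (t,x) ∈ (0,T] × ℝ, together with the Cauchy data u(0,x) = u₀(x) and ∂_t u(0,x) = (4m+1) u₀'(x) for all x ∈ ℝ (the data being attained as limits as t → 0⁺ of u(t,x) and ∂_t u(t,x)). -/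
open Set Filter

/-- For `m ∈ ℕ`, `T > 0` and a smooth `u₀ : ℝ → ℝ`, the function
`u(t,x) = ∑_{j=0}^{m} C_j^{(m)} t^j u₀^{(j)}(x+t)`, where
`C_j^{(m)} = ((−2)^j / j!) · (m)_j / (−1/2)_j` (falling factorials), solves the singular
hyperbolic equation `∂_t² u − ∂_x² u + (1/(2t))(∂_t u − (4m+1)∂_x u) = 0` on `(0,T] × ℝ`,
with Cauchy data `u(0,x) = u₀(x)`, `∂_t u(0,x) = (4m+1) u₀'(x)` attained as limits
as `t → 0⁺`. -/
theorem stmt0 (m : ℕ) (T : ℝ) (hT : 0 < T) (u₀ : ℝ → ℝ) (hu₀ : ContDiff ℝ (⊤ : ℕ∞) u₀)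
    (Cc : ℕ → ℝ)
    (hCc : ∀ j : ℕ, Cc j = ((-2 : ℝ) ^ j / (Nat.factorial j : ℝ)) *
      ((∏ i ∈ Finset.range j, ((m : ℝ) - i)) / (∏ i ∈ Finset.range j, ((-1 : ℝ) / 2 - i))))
    (u : ℝ → ℝ → ℝ)
    (hu : ∀ t x : ℝ, u t x = ∑ j ∈ Finset.range (m + 1),
      Cc j * t ^ j * iteratedDeriv j u₀ (x + t)) :
    (∀ t ∈ Ioc (0 : ℝ) T, ∀ x : ℝ,
      iteratedDeriv 2 (fun s => u s x) t - iteratedDeriv 2 (fun y => u t y) x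
        + (1 / (2 * t)) * (deriv (fun s => u s x) t
            - (4 * (m : ℝ) + 1) * deriv (fun y => u t y) x) = 0) ∧
    (∀ x : ℝ, Tendsto (fun t => u t x) (nhdsWithin 0 (Ioi 0)) (nhds (u₀ x))) ∧
    (∀ x : ℝ, Tendsto (fun t => deriv (fun s => u s x) t) (nhdsWithin 0 (Ioi 0))
      (nhds ((4 * (m : ℝ) + 1) * deriv u₀ x))) := by
  have hF : ∀ j y, HasDerivAt (iteratedDeriv j u₀) (iteratedDeriv (j+1) u₀ y) y := by
    intro j y
    rw [iteratedDeriv_succ]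
    exact ((hu₀.differentiable_iteratedDeriv j (by exact_mod_cast WithTop.coe_lt_top _)) y).hasDerivAt
  have hC0 : Cc 0 = 1 := by simp [hCc]
  have hrec : ∀ j : ℕ, Cc (j+1) * ((j+1) * (j + 1/2)) = 2 * (m - j) * Cc j := by
    intro j
    have h1 : (∏ i ∈ Finset.range j, ((-1 : ℝ) / 2 - i)) ≠ 0 := by
      refine Finset.prod_ne_zero_iff.2 fun i _ => ?_
      have : (0:ℝ) ≤ i := i.cast_nonneg
      intro h; linarith
    have h2 : ((-1 : ℝ) / 2 - j) ≠ 0 := by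
      have : (0:ℝ) ≤ j := j.cast_nonneg
      intro h; linarith
    have h3 : (Nat.factorial j : ℝ) ≠ 0 := by positivity
    have h4 : (j : ℝ) + 1 ≠ 0 := by positivity
    rw [hCc, hCc, Finset.prod_range_succ, Finset.prod_range_succ, Nat.factorial_succ]
    push_cast
    generalize (∏ i ∈ Finset.range j, ((-1 : ℝ) / 2 - i)) = A at *
    generalize (∏ i ∈ Finset.range j, ((m : ℝ) - i)) = B at *
    have h5 : (j : ℝ) + 1/2 = -((-1 : ℝ) / 2 - j) := by ring
    rw [h5]
    generalize ((-1 : ℝ) / 2 - j) = D at *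
    field_simp
    ring
  have hCm : Cc (m+1) = 0 := by
    rw [hCc, Finset.prod_range_succ]; simp
  have hG : ∀ k x t, HasDerivAt (fun s => iteratedDeriv k u₀ (x + s)) (iteratedDeriv (k+1) u₀ (x+t)) t := by
    intro k x t
    exact (hF k (x+t)).comp_const_add x t
  have hG' : ∀ k x t, HasDerivAt (fun y => iteratedDeriv k u₀ (y + t)) (iteratedDeriv (k+1) u₀ (x+t)) x := by
    intro k x t
    exact (hF k (x+t)).comp_add_const x t
  have hut : ∀ x, deriv (fun s => u s x) = fun t => ∑ j ∈ Finset.range (m + 1),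
      Cc j * ((j * t ^ (j-1)) * iteratedDeriv j u₀ (x + t) + t ^ j * iteratedDeriv (j+1) u₀ (x+t)) := by
    intro x; ext t
    simp only [hu, mul_assoc (Cc _)]
    apply HasDerivAt.deriv
    refine HasDerivAt.fun_sum fun j _ => ?_
    exact ((hasDerivAt_pow j t).mul (hG j x t)).const_mul (Cc j)
  have hux : ∀ t, deriv (fun y => u t y) = fun x => ∑ j ∈ Finset.range (m + 1),
      Cc j * t ^ j * iteratedDeriv (j+1) u₀ (x+t) := by
    intro t; ext x
    simp only [hu]
    apply HasDerivAt.deriv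
    refine HasDerivAt.fun_sum fun j _ => ?_
    exact (hG' j x t).const_mul _
  have hutt : ∀ x t, iteratedDeriv 2 (fun s => u s x) t = ∑ j ∈ Finset.range (m + 1),
      Cc j * (((j * (((j-1 : ℕ) : ℝ) * t ^ (j-1-1))) * iteratedDeriv j u₀ (x + t) 
        + (j * t ^ (j-1)) * iteratedDeriv (j+1) u₀ (x+t)) + ((j * t ^ (j-1)) * iteratedDeriv (j+1) u₀ (x+t) + t ^ j * iteratedDeriv (j+1+1) u₀ (x+t))) := by
    intro x t
    rw [iteratedDeriv_succ, iteratedDeriv_one, hut]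
    apply HasDerivAt.deriv
    refine HasDerivAt.fun_sum fun j _ => ?_
    exact ((((hasDerivAt_pow (j-1) t).const_mul (j:ℝ)).mul (hG j x t)).add ((hasDerivAt_pow j t).mul (hG (j+1) x t))).const_mul (Cc j)
  have huxx : ∀ t x, iteratedDeriv 2 (fun y => u t y) x = ∑ j ∈ Finset.range (m + 1),
      Cc j * t ^ j * iteratedDeriv (j+1+1) u₀ (x+t) := by
    intro t x
    rw [iteratedDeriv_succ, iteratedDeriv_one, hux]
    apply HasDerivAt.deriv
    refine HasDerivAt.fun_sum fun j _ => ?_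
    exact (hG' (j+1) x t).const_mul _
  have hcont : ∀ k, Continuous (iteratedDeriv k u₀) := fun k =>
    continuous_iff_continuousAt.2 fun y => (hF k y).continuousAt
  refine ⟨?_, ?_, ?_⟩
  · intro t ht x
    have ht0 : t ≠ 0 := ht.1.ne'
    rw [hutt, huxx, hut, hux]
    have key : ∑ j ∈ Finset.range (m+1), ((Cc j * (j * (j - 1/2)) * t^j * iteratedDeriv j u₀ (x+t)) - 
       (Cc (j+1) * ((j+1 : ℕ) * ((j+1 : ℕ) - 1/2)) * t^(j+1) * iteratedDeriv (j+1) u₀ (x+t))) = 0 := by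
      rw [Finset.sum_range_sub' (fun j : ℕ => Cc j * (j * (j - 1/2)) * t^j * iteratedDeriv j u₀ (x+t))]
      simp [hCm]
    have : ∀ E : ℝ, t^2 * E = 0 → E = 0 := fun E h => by simpa [ht0] using h
    apply this
    rw [← key]
    simp only [Finset.mul_sum, ← Finset.sum_sub_distrib, ← Finset.sum_add_distrib]
    refine Finset.sum_congr rfl fun j _ => ?_
    have e : Cc (j+1) * (((j+1 : ℕ):ℝ) * (((j+1 : ℕ):ℝ) - 1/2)) = 2 * (m - j) * Cc j := by
      rw [← hrec]; push_cast; ring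
    rw [e]
    rcases j with _ | _ | j
    · simp; field_simp; ring
    · simp; field_simp; ring
    · simp only [Nat.add_sub_cancel]
      push_cast
      field_simp
      ring
  · intro x
    have h : Continuous (fun t => u t x) := by
      simp only [hu]
      have := hcont
      fun_prop
    have h0 : u 0 x = u₀ x := by
      rw [hu, Finset.sum_range_succ']
      simp [hC0]
    rw [← h0]
    exact h.continuousAt.tendsto.mono_left nhdsWithin_le_nhds
  · intro x
    have h : Continuous (deriv (fun t => u t x)) := by
      rw [hut]
      have := hcont
      fun_prop
    have h0 : deriv (fun t => u t x) 0 = (4 * (m : ℝ) + 1) * deriv u₀ x := by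
      rw [hut]
      have h1 := hrec 0
      simp [hC0] at h1
      simp only []
      rw [Finset.sum_range_succ']
      rcases m with _ | m
      · simp [hC0]
      · rw [Finset.sum_range_succ']
        simp [hC0]
        simp at h1
        linear_combination 2 * deriv u₀ x * h1
    rw [← h0]
    exact h.continuousAt.tendsto.mono_left nhdsWithin_le_nhds
end

section
/- Fix T > 0 and an infinitely differentiable function u₀ : ℝ → ℝ. Define u(t,x) = t · u₀(x+t). Then u satisfies ∂_t² u(t,x) − ∂_x² u(t,x) − (2/t) ∂_x u(t,x) = 0 for all (t,x) ∈ (0,T] × ℝ, together with the Cauchy data u(0,x) = 0 and ∂_t u(0,x) = u₀(x) for all x ∈ ℝ (the data being attained as limits as t → 0⁺ of u(t,x) and ∂_t u(t,x)). In particular, for this singular lower-order coefficient 2/t, which is not L¹-integrable on (0,T], the solution exhibits no loss of regularity. -/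
open Set Filter

/-- For `T > 0` and a smooth `u₀ : ℝ → ℝ`, the function `u(t,x) = t·u₀(x+t)`
solves `∂_t² u − ∂_x² u − (2/t) ∂_x u = 0` on `(0,T] × ℝ` with Cauchy data `u(0,x) = 0`,
`∂_t u(0,x) = u₀(x)` attained as limits as `t → 0⁺`: no loss of regularity occurs even
though the lower-order coefficient `2/t` is not `L¹`-integrable on `(0,T]`. -/
theorem stmt1 (T : ℝ) (hT : 0 < T) (u₀ : ℝ → ℝ) (hu₀ : ContDiff ℝ (⊤ : ℕ∞) u₀)
    (u : ℝ → ℝ → ℝ) (hu : ∀ t x : ℝ, u t x = t * u₀ (x + t)) :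
    (∀ t ∈ Ioc (0 : ℝ) T, ∀ x : ℝ,
      iteratedDeriv 2 (fun s => u s x) t - iteratedDeriv 2 (fun y => u t y) x
        - (2 / t) * deriv (fun y => u t y) x = 0) ∧
    (∀ x : ℝ, Tendsto (fun t => u t x) (nhdsWithin 0 (Ioi 0)) (nhds 0)) ∧
    (∀ x : ℝ, Tendsto (fun t => deriv (fun s => u s x) t) (nhdsWithin 0 (Ioi 0))
      (nhds (u₀ x))) := by
  have hd0 : Differentiable ℝ u₀ := hu₀.differentiable (by simp)
  have hc1 : ContDiff ℝ 1 (deriv u₀) :=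
    (contDiff_infty_iff_deriv.1 hu₀).2.of_le (by simp)
  have hd1 : Differentiable ℝ (deriv u₀) := hc1.differentiable (by simp)
  have h0 : ∀ z, HasDerivAt u₀ (deriv u₀ z) z := fun z => (hd0 z).hasDerivAt
  have h1 : ∀ z, HasDerivAt (deriv u₀) (deriv (deriv u₀) z) z := fun z => (hd1 z).hasDerivAt
  have ht : ∀ x, deriv (fun s => u s x) = fun s => u₀ (x + s) + s * deriv u₀ (x + s) := by
    intro x
    funext s
    simp only [hu]
    have := (hasDerivAt_id' s).mul ((h0 (x + s)).comp_const_add x s)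
    rw [HasDerivAt.deriv (f := fun s => s * u₀ (x + s)) this]
    ring
  have hx : ∀ t, deriv (fun y => u t y) = fun y => t * deriv u₀ (y + t) := by
    intro t
    funext y
    simp only [hu]
    exact (((h0 (y + t)).comp_add_const y t).const_mul t).deriv
  refine ⟨?_, ?_, ?_⟩
  · intro t htm x
    have hne : t ≠ 0 := htm.1.ne'
    rw [iteratedDeriv_succ, iteratedDeriv_one, iteratedDeriv_succ, iteratedDeriv_one, ht, hx]
    have e1 := ((h0 (x + t)).comp_const_add x t).add
      ((hasDerivAt_id' t).mul ((h1 (x + t)).comp_const_add x t))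
    have e2 := ((h1 (x + t)).comp_add_const x t).const_mul t
    rw [HasDerivAt.deriv (f := fun s => u₀ (x + s) + s * deriv u₀ (x + s)) e1, e2.deriv]
    field_simp
    ring
  · intro x
    have hc : Continuous (fun t => u t x) := by
      simp only [hu]
      have := hd0.continuous
      fun_prop
    have := (hc.tendsto 0).mono_left (nhdsWithin_le_nhds (s := Ioi 0))
    simpa [hu] using this
  · intro x
    rw [ht]
    have a := hd0.continuous
    have b := hd1.continuous
    have hc : Continuous (fun s => u₀ (x + s) + s * deriv u₀ (x + s)) := by fun_prop
    have := (hc.tendsto 0).mono_left (nhdsWithin_le_nhds (s := Ioi 0))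
    simpa using this
end

section
/- Fix T > 0 and an infinitely differentiable function u₀ : ℝ → ℝ. Define u(t,x) = t² · u₀(x+t). Then u satisfies ∂_t² u(t,x) − ∂_x² u(t,x) − (1/t)(∂_t u(t,x) + 3 ∂_x u(t,x)) = 0 for all (t,x) ∈ (0,T] × ℝ, together with the zero Cauchy data u(0,x) = 0 and ∂_t u(0,x) = 0 for all x ∈ ℝ (the data being attained as limits as t → 0⁺ of u(t,x) and ∂_t u(t,x)). -/
open Set Filter

/-- For `T > 0` and a smooth `u₀ : ℝ → ℝ`, the function `u(t,x) = t²·u₀(x+t)`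
solves `∂_t² u − ∂_x² u − (1/t)(∂_t u + 3∂_x u) = 0` on `(0,T] × ℝ` with zero Cauchy data
`u(0,x) = 0`, `∂_t u(0,x) = 0` attained as limits as `t → 0⁺`. -/
theorem stmt3 (T : ℝ) (hT : 0 < T) (u₀ : ℝ → ℝ) (hu₀ : ContDiff ℝ (⊤ : ℕ∞) u₀)
    (u : ℝ → ℝ → ℝ) (hu : ∀ t x : ℝ, u t x = t ^ 2 * u₀ (x + t)) :
    (∀ t ∈ Ioc (0 : ℝ) T, ∀ x : ℝ,
      iteratedDeriv 2 (fun s => u s x) t - iteratedDeriv 2 (fun y => u t y) x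
        - (1 / t) * (deriv (fun s => u s x) t + 3 * deriv (fun y => u t y) x) = 0) ∧
    (∀ x : ℝ, Tendsto (fun t => u t x) (nhdsWithin 0 (Ioi 0)) (nhds 0)) ∧
    (∀ x : ℝ, Tendsto (fun t => deriv (fun s => u s x) t) (nhdsWithin 0 (Ioi 0))
      (nhds 0)) := by
  have hd : Differentiable ℝ u₀ := hu₀.differentiable (by simp)
  have hc1 : ContDiff ℝ 1 (deriv u₀) := by
    have h2 : ContDiff ℝ (1 + 1) u₀ := hu₀.of_le (by
      have h : ((2 : ℕ∞) : WithTop ℕ∞) ≤ ((⊤ : ℕ∞) : WithTop ℕ∞) := WithTop.coe_le_coe.2 le_top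
      rw [one_add_one_eq_two]
      exact h)
    exact (contDiff_succ_iff_deriv.1 h2).2.2
  have hd1 : Differentiable ℝ (deriv u₀) := hc1.differentiable (by simp)
  have hsh : ∀ x t : ℝ, HasDerivAt (fun s => u₀ (x + s)) (deriv u₀ (x + t)) t := fun x t =>
    (hd (x + t)).hasDerivAt.comp_const_add x t
  have hsh1 : ∀ x t : ℝ, HasDerivAt (fun s => deriv u₀ (x + s)) (deriv (deriv u₀) (x + t)) t :=
    fun x t => (hd1 (x + t)).hasDerivAt.comp_const_add x t
  have hsy : ∀ x t : ℝ, HasDerivAt (fun s => u₀ (s + t)) (deriv u₀ (x + t)) x := fun x t =>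
    (hd (x + t)).hasDerivAt.comp_add_const x t
  have hsy1 : ∀ x t : ℝ, HasDerivAt (fun s => deriv u₀ (s + t)) (deriv (deriv u₀) (x + t)) x :=
    fun x t => (hd1 (x + t)).hasDerivAt.comp_add_const x t
  have hsq : ∀ t : ℝ, HasDerivAt (fun s : ℝ => s ^ 2) (2 * t) t := fun t => by
    simpa using hasDerivAt_pow 2 t
  have hl : ∀ t : ℝ, HasDerivAt (fun s : ℝ => 2 * s) 2 t := fun t => by
    simpa using (hasDerivAt_id t).const_mul 2
  have dt : ∀ x : ℝ, deriv (fun s => u s x)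
      = fun t => 2 * t * u₀ (x + t) + t ^ 2 * deriv u₀ (x + t) := by
    intro x
    funext t
    simp only [hu]
    exact ((hsq t).mul (hsh x t)).deriv
  have dx : ∀ t : ℝ, deriv (fun y => u t y) = fun x => t ^ 2 * deriv u₀ (x + t) := by
    intro t
    funext x
    simp only [hu]
    exact ((hsy x t).const_mul (t ^ 2)).deriv
  refine ⟨?_, ?_, ?_⟩
  · intro t ht x
    have ht0 : t ≠ 0 := ht.1.ne'
    have e1 := (((hl t).mul (hsh x t)).add ((hsq t).mul (hsh1 x t))).deriv
    have e2 := ((hsy1 x t).const_mul (t ^ 2)).deriv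
    rw [iteratedDeriv_succ, iteratedDeriv_one, iteratedDeriv_succ, iteratedDeriv_one, dt, dx]
    erw [e1, e2]
    field_simp
    ring
  · intro x
    simp only [hu]
    have hc : Continuous (fun t : ℝ => t ^ 2 * u₀ (x + t)) := by
      have := hd.continuous
      fun_prop
    simpa using (hc.tendsto 0).mono_left nhdsWithin_le_nhds
  · intro x
    rw [dt]
    have hc : Continuous (fun t : ℝ => 2 * t * u₀ (x + t) + t ^ 2 * deriv u₀ (x + t)) := by
      have := hd.continuous
      have := hd1.continuous
      fun_prop
    simpa using (hc.tendsto 0).mono_left nhdsWithin_le_nhds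
end

section
/- Let κ₁ ∈ [0,1] and κ₂ ∈ (0,1] with κ₁ ≤ κ₂, and define a(t,x) = ⟨x⟩^{2κ₁} (2 + cos(⟨x⟩^{1−κ₂})) · t^{−1/4} (2 + sin(t^{−1/8})) for (t,x) ∈ (0,1] × ℝ, where ⟨x⟩ = (1+x²)^{1/2}. Then for every β ∈ ℕ there exists a constant C_β > 0 such that for all (t,x) ∈ (0,1] × ℝ: |∂_x^β a(t,x)| ≤ C_β ⟨x⟩^{2κ₁ − κ₂ β} t^{−1/4} and |∂_x^β ∂_t a(t,x)| ≤ C_β ⟨x⟩^{2κ₁ − κ₂ β} t^{−11/8}. That is, a satisfies the singular-coefficient estimates with structure functions ω(x) = ⟨x⟩^{κ₁}, Φ(x) = ⟨x⟩^{κ₂} and singularity exponents p = 1/4, q = 11/8. -/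
open Set Filter Real

noncomputable def jb (x : ℝ) : ℝ := Real.sqrt (1 + x ^ 2)

lemma one_le_jb (x : ℝ) : 1 ≤ jb x := by
  unfold jb
  rw [Real.one_le_sqrt]
  nlinarith [sq_nonneg x]

lemma jb_pos (x : ℝ) : 0 < jb x := lt_of_lt_of_le one_pos (one_le_jb x)

lemma abs_le_jb (x : ℝ) : |x| ≤ jb x := by
  unfold jb
  apply Real.abs_le_sqrt
  linarith

lemma jb_rpow_hasDerivAt (s x : ℝ) :
    HasDerivAt (fun y => jb y ^ s) (s * x * jb x ^ (s - 2)) x := by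
  have h1 : HasDerivAt jb (x / jb x) x := by
    have h0 : HasDerivAt (fun y : ℝ => 1 + y ^ 2) (2 * x) x := by
      simpa using ((hasDerivAt_id x).pow 2).const_add 1
    have := h0.sqrt (by positivity)
    unfold jb
    convert this using 1
    field_simp
  have h2 := h1.rpow_const (p := s) (Or.inl (jb_pos x).ne')
  convert h2 using 1
  have : jb x ^ (s - 1) = jb x ^ (s - 2) * jb x := by
    rw [← Real.rpow_add_one (jb_pos x).ne']
    congr 1; ring
  rw [this]
  have := (jb_pos x).ne'
  field_simp

inductive SymCls (k : ℝ) : ℝ → (ℝ → ℝ) → Prop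
  | base (m : ℝ) (j : ℕ) (s e c d : ℝ) (h : (j : ℝ) + s ≤ m) :
      SymCls k m (fun x => x ^ j * jb x ^ s
        * (e + c * Real.cos (jb x ^ (1 - k)) + d * Real.sin (jb x ^ (1 - k))))
  | add (m : ℝ) (f g : ℝ → ℝ) (hf : SymCls k m f) (hg : SymCls k m g) :
      SymCls k m (fun x => f x + g x)

lemma SymCls.bound {k m : ℝ} {f : ℝ → ℝ} (h : SymCls k m f) :
    ∃ C : ℝ, 0 < C ∧ ∀ x, |f x| ≤ C * jb x ^ m := by
  induction h with
  | base j s e c d h =>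
    refine ⟨|e| + |c| + |d| + 1, by positivity, fun x => ?_⟩
    have hJ := jb_pos x
    have h1 : |x ^ j * jb x ^ s| ≤ jb x ^ m := by
      rw [abs_mul, abs_pow, abs_of_pos (Real.rpow_pos_of_pos hJ s)]
      calc |x| ^ j * jb x ^ s ≤ jb x ^ j * jb x ^ s := by
            have := Real.rpow_pos_of_pos hJ s
            gcongr
            exact abs_le_jb x
        _ = jb x ^ ((j : ℝ) + s) := by
            rw [Real.rpow_add hJ, Real.rpow_natCast]
        _ ≤ jb x ^ m := Real.rpow_le_rpow_of_exponent_le (one_le_jb x) h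
    have h2 : |e + c * Real.cos (jb x ^ (1 - k)) + d * Real.sin (jb x ^ (1 - k))|
        ≤ |e| + |c| + |d| + 1 := by
      have a1 := abs_add_three e (c * Real.cos (jb x ^ (1 - k))) (d * Real.sin (jb x ^ (1 - k)))
      rw [abs_mul, abs_mul] at a1
      have a2 := mul_le_of_le_one_right (abs_nonneg c) (Real.abs_cos_le_one (jb x ^ (1 - k)))
      have a3 := mul_le_of_le_one_right (abs_nonneg d) (Real.abs_sin_le_one (jb x ^ (1 - k)))
      linarith
    rw [abs_mul, mul_comm]
    exact mul_le_mul h2 h1 (abs_nonneg _) (by positivity)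
  | add f g hf hg ihf ihg =>
    obtain ⟨C, hC, h1⟩ := ihf
    obtain ⟨D, hD, h2⟩ := ihg
    refine ⟨C + D, by positivity, fun x => ?_⟩
    have := abs_add_le (f x) (g x)
    have := h1 x
    have := h2 x
    linarith

lemma SymCls.hasDeriv {k m : ℝ} (hk : k ≤ 1) {f : ℝ → ℝ} (h : SymCls k m f) :
    ∃ g, SymCls k (m - k) g ∧ ∀ x, HasDerivAt f (g x) x := by
  induction h with
  | base j s e c d h =>
    have hT : ∀ x, HasDerivAt
        (fun x => e + c * Real.cos (jb x ^ (1 - k)) + d * Real.sin (jb x ^ (1 - k)))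
        ((d * Real.cos (jb x ^ (1 - k)) - c * Real.sin (jb x ^ (1 - k)))
          * ((1 - k) * x * jb x ^ (1 - k - 2))) x := by
      intro x
      have hp := jb_rpow_hasDerivAt (1 - k) x
      have := ((hp.cos.const_mul c).const_add e).add (hp.sin.const_mul d)
      refine HasDerivAt.congr_deriv this ?_
      ring
    have s2 := SymCls.base (k := k) (m - k) (j + 1) (s - 2) (s * e) (s * c) (s * d)
      (by push_cast; linarith)
    have s3 := SymCls.base (k := k) (m - k) (j + 1) (s + (1 - k - 2)) 0 ((1 - k) * d) (-((1 - k) * c))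
      (by push_cast; linarith)
    have s23 := SymCls.add _ _ _ s2 s3
    rcases j with _ | j
    · refine ⟨_, s23, fun x => ?_⟩
      have := ((hasDerivAt_pow 0 x).mul (jb_rpow_hasDerivAt s x)).mul (hT x)
      refine HasDerivAt.congr_deriv this ?_
      try simp only [Pi.mul_apply]
      rw [Real.rpow_add (jb_pos x)]
      push_cast
      ring
    · have s1 := SymCls.base (k := k) (m - k) j s ((j + 1) * e) ((j + 1) * c) ((j + 1) * d)
        (by push_cast at h; linarith)
      refine ⟨_, SymCls.add _ _ _ s1 s23, fun x => ?_⟩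
      have := ((hasDerivAt_pow (j + 1) x).mul (jb_rpow_hasDerivAt s x)).mul (hT x)
      refine HasDerivAt.congr_deriv this ?_
      try simp only [Pi.mul_apply]
      rw [Real.rpow_add (jb_pos x)]
      push_cast
      ring
  | add f g hf hg ihf ihg =>
    obtain ⟨f', hf', h1⟩ := ihf
    obtain ⟨g', hg', h2⟩ := ihg
    exact ⟨_, SymCls.add _ _ _ hf' hg', fun x => (h1 x).add (h2 x)⟩

lemma SymCls.iter {k : ℝ} (hk : k ≤ 1) (n : ℕ) : ∀ {m : ℝ} {f : ℝ → ℝ}, SymCls k m f →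
    SymCls k (m - k * n) (iteratedDeriv n f) := by
  induction n with
  | zero => intro m f h; simpa using h
  | succ n ih =>
    intro m f h
    obtain ⟨g, hg, hd⟩ := h.hasDeriv hk
    have : deriv f = g := funext fun x => (hd x).deriv
    rw [iteratedDeriv_succ', this]
    convert ih hg using 1
    push_cast; ring

lemma tpart (t : ℝ) (ht : 0 < t) :
    HasDerivAt (fun t : ℝ => t ^ (-(1 / 4 : ℝ)) * (2 + Real.sin (t ^ (-(1 / 8 : ℝ)))))
      (-(1 / 4) * t ^ (-(1 / 4 : ℝ) - 1) * (2 + Real.sin (t ^ (-(1 / 8 : ℝ))))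
        + t ^ (-(1 / 4 : ℝ)) *
          (Real.cos (t ^ (-(1 / 8 : ℝ))) * (-(1 / 8) * t ^ (-(1 / 8 : ℝ) - 1)))) t := by
  have h4 := Real.hasDerivAt_rpow_const (x := t) (p := -(1 / 4 : ℝ)) (Or.inl ht.ne')
  have h8 := Real.hasDerivAt_rpow_const (x := t) (p := -(1 / 8 : ℝ)) (Or.inl ht.ne')
  exact h4.mul (h8.sin.const_add 2)

lemma tbound (t : ℝ) (ht : 0 < t) (ht1 : t ≤ 1) :
    |(-(1 / 4) * t ^ (-(1 / 4 : ℝ) - 1) * (2 + Real.sin (t ^ (-(1 / 8 : ℝ))))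
        + t ^ (-(1 / 4 : ℝ)) *
          (Real.cos (t ^ (-(1 / 8 : ℝ))) * (-(1 / 8) * t ^ (-(1 / 8 : ℝ) - 1))))|
      ≤ 3 * t ^ (-(11 / 8 : ℝ)) := by
  have e1 : t ^ (-(1 / 4 : ℝ)) * t ^ (-(1 / 8 : ℝ) - 1) = t ^ (-(11 / 8 : ℝ)) := by
    rw [← Real.rpow_add ht]; norm_num
  have e2 : t ^ (-(1 / 4 : ℝ) - 1) ≤ t ^ (-(11 / 8 : ℝ)) :=
    Real.rpow_le_rpow_of_exponent_ge ht ht1 (by norm_num)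
  have p0 : 0 < t ^ (-(1 / 4 : ℝ) - 1) := Real.rpow_pos_of_pos ht _
  have p1 : 0 < t ^ (-(11 / 8 : ℝ)) := Real.rpow_pos_of_pos ht _
  have : t ^ (-(1 / 4 : ℝ)) *
          (Real.cos (t ^ (-(1 / 8 : ℝ))) * (-(1 / 8) * t ^ (-(1 / 8 : ℝ) - 1)))
      = -(1 / 8) * Real.cos (t ^ (-(1 / 8 : ℝ))) * t ^ (-(11 / 8 : ℝ)) := by
    rw [← e1]; ring
  rw [this]
  generalize t ^ (-(1 / 8 : ℝ)) = w
  have := Real.sin_le_one w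
  have := Real.neg_one_le_sin w
  have := Real.cos_le_one w
  have := Real.neg_one_le_cos w
  rw [abs_le]
  constructor <;> nlinarith

/-- Let `κ₁ ∈ [0,1]`, `κ₂ ∈ (0,1]` with `κ₁ ≤ κ₂`, and let
`a(t,x) = ⟨x⟩^{2κ₁}(2 + cos(⟨x⟩^{1−κ₂})) · t^{−1/4}(2 + sin(t^{−1/8}))`, where
`⟨x⟩ = (1+x²)^{1/2}`. Then for every `β ∈ ℕ` there is `C_β > 0` such that on `(0,1] × ℝ`:
`|∂_x^β a(t,x)| ≤ C_β ⟨x⟩^{2κ₁−κ₂β} t^{−1/4}` and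
`|∂_x^β ∂_t a(t,x)| ≤ C_β ⟨x⟩^{2κ₁−κ₂β} t^{−11/8}`; i.e. `a` satisfies the
singular-coefficient estimates with `ω(x) = ⟨x⟩^{κ₁}`, `Φ(x) = ⟨x⟩^{κ₂}`, `p = 1/4`,
`q = 11/8`. -/
theorem stmt5 (κ₁ κ₂ : ℝ) (hκ₁0 : 0 ≤ κ₁) (hκ₁1 : κ₁ ≤ 1) (hκ₂0 : 0 < κ₂) (hκ₂1 : κ₂ ≤ 1)
    (hκ : κ₁ ≤ κ₂)
    (a : ℝ → ℝ → ℝ)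
    (ha : ∀ t > (0 : ℝ), ∀ x : ℝ,
      a t x = (Real.sqrt (1 + x ^ 2)) ^ (2 * κ₁)
        * (2 + Real.cos ((Real.sqrt (1 + x ^ 2)) ^ (1 - κ₂)))
        * (t ^ (-(1 / 4 : ℝ)) * (2 + Real.sin (t ^ (-(1 / 8 : ℝ)))))) :
    ∀ β : ℕ, ∃ Cβ : ℝ, 0 < Cβ ∧ ∀ t ∈ Ioc (0 : ℝ) 1, ∀ x : ℝ,
      |iteratedDeriv β (fun y => a t y) x| ≤
        Cβ * (Real.sqrt (1 + x ^ 2)) ^ (2 * κ₁ - κ₂ * β) * t ^ (-(1 / 4 : ℝ)) ∧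
      |iteratedDeriv β (fun y => deriv (fun s => a s y) t) x| ≤
        Cβ * (Real.sqrt (1 + x ^ 2)) ^ (2 * κ₁ - κ₂ * β) * t ^ (-(11 / 8 : ℝ)) := by
  intro β
  set f : ℝ → ℝ := fun x => jb x ^ (2 * κ₁) * (2 + Real.cos (jb x ^ (1 - κ₂))) with hf
  have hsym : SymCls κ₂ (2 * κ₁) f := by
    have := SymCls.base (k := κ₂) (2 * κ₁) 0 (2 * κ₁) 2 1 0 (by simp)
    simpa using this
  obtain ⟨C, hC, hb⟩ := (hsym.iter hκ₂1 β).bound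
  refine ⟨3 * C, by positivity, fun t ht x => ?_⟩
  obtain ⟨ht0, ht1⟩ := ht
  have key : ∀ (c w : ℝ), |c| ≤ 3 * w →
      |iteratedDeriv β (fun y => f y * c) x| ≤
        3 * C * (Real.sqrt (1 + x ^ 2)) ^ (2 * κ₁ - κ₂ * β) * w := by
    intro c w hc
    have e : iteratedDeriv β (fun y => f y * c) x = c * iteratedDeriv β f x := by
      rw [← iteratedDeriv_const_mul_field]
      simp only [mul_comm]
    rw [e, abs_mul]
    calc |c| * |iteratedDeriv β f x| ≤ (3 * w) * (C * jb x ^ (2 * κ₁ - κ₂ * β)) :=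
          mul_le_mul hc (hb x) (abs_nonneg _) ((abs_nonneg c).trans hc)
      _ = _ := by unfold jb; ring
  constructor
  · have e : (fun y => a t y) =
        fun y => f y * (t ^ (-(1 / 4 : ℝ)) * (2 + Real.sin (t ^ (-(1 / 8 : ℝ))))) :=
      funext fun y => ha t ht0 y
    rw [e]
    apply key
    have p := Real.rpow_pos_of_pos ht0 (-(1 / 4 : ℝ))
    have := Real.sin_le_one (t ^ (-(1 / 8 : ℝ)))
    have := Real.neg_one_le_sin (t ^ (-(1 / 8 : ℝ)))
    rw [abs_le]
    constructor <;> nlinarith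
  · obtain ⟨D, hD1, hD2⟩ : ∃ D, HasDerivAt
        (fun t : ℝ => t ^ (-(1 / 4 : ℝ)) * (2 + Real.sin (t ^ (-(1 / 8 : ℝ))))) D t ∧
        |D| ≤ 3 * t ^ (-(11 / 8 : ℝ)) := ⟨_, tpart t ht0, tbound t ht0 ht1⟩
    have e : (fun y => deriv (fun s => a s y) t) = fun y => f y * D := by
      funext y
      have h1 := hD1.const_mul (f y)
      refine (h1.congr_of_eventuallyEq ?_).deriv
      filter_upwards [lt_mem_nhds ht0] with s hs
      exact ha s hs y
    rw [e]
    exact key _ _ hD2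
end

section
/- In the setting described in the context, there exists a constant C' > 0, independent of (x,ξ), such that for all (x,ξ) ∈ ℝ^n × ℝ^n one has ∫_0^T |a(t,x,ξ) − ã(t,x,ξ)| dt ≤ C' (Φ(x)⟨ξ⟩_k)^{2 − (1−p)/(q−p)}. In other words, although a − ã blows up like t^{−p} as t → 0, it is L¹-integrable in t, with integral bounded by the stated power of Φ(x)⟨ξ⟩_k. -/
open Set Filter Real MeasureTheory

noncomputable section

/-- Partial derivative of `f : ℝⁿ → ℝ` in the `i`-th coordinate. -/
def pd {n : ℕ} (i : Fin n) (f : (Fin n → ℝ) → ℝ) : (Fin n → ℝ) → ℝ :=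
  fun x => deriv (fun s => f (Function.update x i s)) (x i)

/-- Iterated partial derivative `∂^α` with respect to a multi-index `α`. -/
def mpd {n : ℕ} (α : Fin n → ℕ) (f : (Fin n → ℝ) → ℝ) : (Fin n → ℝ) → ℝ :=
  (List.finRange n).foldr (fun i g => (pd i)^[α i] g) f

/-- `∂_ξ^α ∂_x^β` applied to a symbol `b(x, ξ)`. -/
def mpdSymb {n : ℕ} (α β : Fin n → ℕ) (b : (Fin n → ℝ) → (Fin n → ℝ) → ℝ) :
    (Fin n → ℝ) → (Fin n → ℝ) → ℝ :=
  fun x ξ => mpd α (fun ξ' => mpd β (fun x' => b x' ξ') x) ξ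

/-- Length `|α| = ∑ αᵢ` of a multi-index. -/
def mlen {n : ℕ} (α : Fin n → ℕ) : ℕ := ∑ i, α i

/-- Factorial `α! = ∏ αᵢ!` of a multi-index. -/
def mfact {n : ℕ} (α : Fin n → ℕ) : ℕ := ∏ i, Nat.factorial (α i)

/-- `⟨ξ⟩_k = (k² + |ξ|²)^{1/2}`. -/
def jxi {n : ℕ} (k : ℝ) (ξ : Fin n → ℝ) : ℝ := Real.sqrt (k ^ 2 + ∑ i, ξ i ^ 2)

/-- `⟨x⟩ = (1 + |x|²)^{1/2}`. -/
def jx {n : ℕ} (x : Fin n → ℝ) : ℝ := Real.sqrt (1 + ∑ i, x i ^ 2)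

lemma mpd_zero_aux {n : ℕ} (f : (Fin n → ℝ) → ℝ) : mpd (fun _ => 0) f = f := by
  unfold mpd
  induction (List.finRange n) with
  | nil => rfl
  | cons i l ih => simpa using ih

/-- In the setting of the singular hyperbolic Cauchy problem, there is a
constant `C' > 0`, independent of `(x,ξ)`, with
`∫_0^T |a(t,x,ξ) − ã(t,x,ξ)| dt ≤ C' (Φ(x)⟨ξ⟩_k)^{2 − (1−p)/(q−p)}` for all `(x,ξ)`:
although `a − ã` blows up like `t^{−p}` as `t → 0`, it is `L¹`-integrable in `t` with the
stated bound. -/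
theorem stmt8
    {n : ℕ} (hn : 1 ≤ n) (T k p q σ C C₀ : ℝ)
    (hT0 : 0 < T) (hT1 : T ≤ 1) (hk : 1 ≤ k)
    (hq1 : 1 < q) (hq2 : q < 3 / 2) (hp0 : 0 ≤ p) (hp12 : p < 1 / 2) (hpq : p ≤ q - 1)
    (hσ3 : 3 ≤ σ) (hσup : σ < (q - p) / (q - 1))
    -- structure functions
    (ω Φ : (Fin n → ℝ) → ℝ) (hωsm : ContDiff ℝ (⊤ : ℕ∞) ω) (hΦsm : ContDiff ℝ (⊤ : ℕ∞) Φ)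
    (hC1 : 1 ≤ C)
    (hω1 : ∀ x, 1 ≤ ω x) (hωΦ : ∀ x, ω x ≤ Φ x) (hΦx : ∀ x, Φ x ≤ C * jx x)
    (hωest : ∀ (β : Fin n → ℕ) (x : Fin n → ℝ), |mpd β ω x| ≤
      C ^ (mlen β + 1) * (mfact β : ℝ) ^ σ * ω x * jx x ^ (-(mlen β : ℝ)))
    (hΦest : ∀ (β : Fin n → ℕ) (x : Fin n → ℝ), |mpd β Φ x| ≤
      C ^ (mlen β + 1) * (mfact β : ℝ) ^ σ * Φ x * jx x ^ (-(mlen β : ℝ)))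
    -- principal symbol
    (a : ℝ → (Fin n → ℝ) → (Fin n → ℝ) → ℝ)
    (hasm : ∀ t ∈ Ioc (0 : ℝ) T,
      ContDiff ℝ (⊤ : ℕ∞) (fun P : (Fin n → ℝ) × (Fin n → ℝ) => a t P.1 P.2))
    (hatreg : ∀ (x ξ : Fin n → ℝ), ContDiffOn ℝ 1 (fun t => a t x ξ) (Ioc (0 : ℝ) T))
    (hC₀ : 0 < C₀)
    (hell : ∀ t ∈ Ioc (0 : ℝ) T, ∀ (x ξ : Fin n → ℝ),
      C₀ * ω x ^ 2 * jxi k ξ ^ 2 ≤ a t x ξ)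
    (haest : ∀ (α β : Fin n → ℕ), ∀ t ∈ Ioc (0 : ℝ) T, ∀ (x ξ : Fin n → ℝ),
      |mpdSymb α β (a t) x ξ| ≤
        C ^ (mlen α + mlen β + 1) * (mfact α : ℝ) * (mfact β : ℝ) ^ σ *
          t ^ (-p) * ω x ^ 2 * Φ x ^ (-(mlen β : ℝ)) * jxi k ξ ^ (2 - (mlen α : ℝ)))
    (hatest : ∀ (α β : Fin n → ℕ), ∀ t ∈ Ioc (0 : ℝ) T, ∀ (x ξ : Fin n → ℝ),
      |mpdSymb α β (fun y η => deriv (fun s => a s y η) t) x ξ| ≤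
        C ^ (mlen α + mlen β + 1) * (mfact α : ℝ) * (mfact β : ℝ) ^ σ *
          t ^ (-q) * ω x ^ 2 * Φ x ^ (-(mlen β : ℝ)) * jxi k ξ ^ (2 - (mlen α : ℝ)))
    -- excision
    (φ : ℝ → ℝ) (hφsm : ContDiff ℝ (⊤ : ℕ∞) φ) (hφ0 : ∀ s, 0 ≤ φ s) (hφ1 : ∀ s, φ s ≤ 1)
    (hφone : ∀ s ≤ (1 : ℝ), φ s = 1) (hφzero : ∀ s, (2 : ℝ) ≤ s → φ s = 0)
    (atil τ : ℝ → (Fin n → ℝ) → (Fin n → ℝ) → ℝ)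
    (hatil : ∀ t > (0 : ℝ), ∀ (x ξ : Fin n → ℝ), atil t x ξ =
      φ (t ^ (q - p) * (Φ x * jxi k ξ)) * (ω x ^ 2 * jxi k ξ ^ 2)
        + (1 - φ (t ^ (q - p) * (Φ x * jxi k ξ))) * a t x ξ)
    (hτ : ∀ t > (0 : ℝ), ∀ (x ξ : Fin n → ℝ), τ t x ξ = Real.sqrt (atil t x ξ))
    (δ' δ : ℝ) (hδ' : δ' = p / (q - p)) (hδ : δ = (q - p) / σ - (q - 1)) :
    ∃ C' : ℝ, 0 < C' ∧ ∀ (x ξ : Fin n → ℝ),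
      (∫ t in Ioc (0 : ℝ) T, |a t x ξ - atil t x ξ|) ≤
        C' * (Φ x * jxi k ξ) ^ (2 - (1 - p) / (q - p)) := by
  have hqp : 0 < q - p := by linarith
  have h1p : 0 < 1 - p := by linarith
  have hCpos : 0 < C + 1 := by linarith
  set e := (1 - p) / (q - p) with he
  refine ⟨(C + 1) * 2 ^ e / (1 - p), by positivity, fun x ξ => ?_⟩
  have hJ : 1 ≤ jxi k ξ := by
    unfold jxi
    rw [Real.one_le_sqrt]
    have : 0 ≤ ∑ i, ξ i ^ 2 := Finset.sum_nonneg (fun i _ => sq_nonneg _)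
    nlinarith
  have hw := hω1 x
  have hwΦ := hωΦ x
  set J := jxi k ξ with hJdef
  set M := Φ x * J with hM
  have hM0 : 0 < M := by
    have : 0 < Φ x := by linarith
    positivity
  set R : ℝ := (2 / M) ^ (1 / (q - p)) with hR
  have hR0 : 0 < R := by positivity
  have hwM : ω x ^ 2 * J ^ 2 ≤ M ^ 2 := by
    rw [hM, mul_pow]
    gcongr
  have key : ∀ t ∈ Ioc (0 : ℝ) T, |a t x ξ - atil t x ξ| ≤
      (Ioc (0 : ℝ) R).indicator (fun t => (C + 1) * M ^ 2 * t ^ (-p)) t := by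
    intro t ht
    have ht0 : 0 < t := ht.1
    rw [hatil t ht0 x ξ]
    by_cases hs : t ∈ Ioc (0 : ℝ) R
    · rw [Set.indicator_of_mem hs]
      set f := φ (t ^ (q - p) * (Φ x * jxi k ξ)) with hf
      have e1 : a t x ξ - (f * (ω x ^ 2 * J ^ 2) + (1 - f) * a t x ξ)
          = f * (a t x ξ - ω x ^ 2 * J ^ 2) := by ring
      rw [e1, abs_mul, abs_of_nonneg (hφ0 _)]
      have ha := haest (fun _ => 0) (fun _ => 0) t ht x ξ
      simp only [mpdSymb, mpd_zero_aux, mlen, mfact] at ha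
      simp only [Finset.sum_const_zero, Nat.factorial_zero, Finset.prod_const_one, Nat.cast_one,
        Nat.cast_zero, neg_zero, sub_zero, Real.rpow_zero, Real.one_rpow, mul_one, zero_add,
        pow_one, add_zero, Real.rpow_two] at ha
      rw [← hJdef] at ha
      have htp : 1 ≤ t ^ (-p) :=
        Real.one_le_rpow_of_pos_of_le_one_of_nonpos ht0 (ht.2.trans hT1) (by linarith)
      have hb : |a t x ξ - ω x ^ 2 * J ^ 2| ≤ (C + 1) * M ^ 2 * t ^ (-p) := by
        calc |a t x ξ - ω x ^ 2 * J ^ 2| ≤ |a t x ξ| + |ω x ^ 2 * J ^ 2| := abs_sub _ _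
          _ ≤ C * t ^ (-p) * ω x ^ 2 * J ^ 2 + ω x ^ 2 * J ^ 2 * t ^ (-p) := by
            rw [abs_of_nonneg (by positivity : 0 ≤ ω x ^ 2 * J ^ 2)]
            exact add_le_add ha (le_mul_of_one_le_right (by positivity) htp)
          _ = (C + 1) * (ω x ^ 2 * J ^ 2) * t ^ (-p) := by ring
          _ ≤ _ := by gcongr
      calc f * |a t x ξ - ω x ^ 2 * J ^ 2| ≤ 1 * |a t x ξ - ω x ^ 2 * J ^ 2| := by
            gcongr
            exact hφ1 _
        _ ≤ _ := by rw [one_mul]; exact hb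
    · rw [Set.indicator_of_notMem hs]
      have hRt : R ≤ t := by
        by_contra hh
        exact hs ⟨ht0, (not_le.mp hh).le⟩
      have h2 : 2 / M ≤ t ^ (q - p) := by
        have h3 : R ^ (q - p) ≤ t ^ (q - p) := Real.rpow_le_rpow hR0.le hRt hqp.le
        have h4 : R ^ (q - p) = 2 / M := by
          rw [hR, ← Real.rpow_mul (by positivity), one_div_mul_cancel hqp.ne', Real.rpow_one]
        rwa [h4] at h3
      have h5 : 2 ≤ t ^ (q - p) * M := by
        rwa [div_le_iff₀ hM0] at h2
      rw [hφzero _ h5]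
      simp
  have hint : IntegrableOn (fun t : ℝ => (C + 1) * M ^ 2 * t ^ (-p)) (Ioc 0 R) := by
    have := (intervalIntegral.intervalIntegrable_rpow' (a := 0) (b := R) (r := -p)
      (by linarith)).const_mul ((C + 1) * M ^ 2)
    exact (intervalIntegrable_iff_integrableOn_Ioc_of_le hR0.le).mp this
  have hI : Integrable ((Ioc (0 : ℝ) R).indicator (fun t => (C + 1) * M ^ 2 * t ^ (-p))) :=
    hint.integrable_indicator measurableSet_Ioc
  have hnn : ∀ t, 0 ≤ (Ioc (0 : ℝ) R).indicator (fun t => (C + 1) * M ^ 2 * t ^ (-p)) t := by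
    intro t
    apply Set.indicator_nonneg
    intro t ht
    have := Real.rpow_nonneg ht.1.le (-p)
    positivity
  calc (∫ t in Ioc (0 : ℝ) T, |a t x ξ - atil t x ξ|)
      ≤ ∫ t in Ioc (0 : ℝ) T,
        (Ioc (0 : ℝ) R).indicator (fun t => (C + 1) * M ^ 2 * t ^ (-p)) t := by
        apply integral_mono_of_nonneg
        · exact Eventually.of_forall (fun t => abs_nonneg _)
        · exact hI.integrableOn
        · exact (ae_restrict_iff' measurableSet_Ioc).mpr (Eventually.of_forall key)
    _ ≤ ∫ t, (Ioc (0 : ℝ) R).indicator (fun t => (C + 1) * M ^ 2 * t ^ (-p)) t :=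
        setIntegral_le_integral hI (Eventually.of_forall hnn)
    _ = (C + 1) * M ^ 2 * (R ^ (1 - p) / (1 - p)) := by
        rw [integral_indicator measurableSet_Ioc, ← intervalIntegral.integral_of_le hR0.le,
          intervalIntegral.integral_const_mul, integral_rpow (Or.inl (by linarith)),
          show -p + 1 = 1 - p by ring, Real.zero_rpow h1p.ne', sub_zero]
    _ = (C + 1) * 2 ^ e / (1 - p) * M ^ (2 - e) := by
        have h6 : R ^ (1 - p) = 2 ^ e / M ^ e := by
          rw [hR, ← Real.rpow_mul (by positivity), ← Real.div_rpow (by norm_num) hM0.le, he]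
          congr 1
          ring
        rw [h6, Real.rpow_sub hM0, Real.rpow_two]
        ring
end
end
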